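/- Let 𝒦₁, 𝒦₂ be simplicial complexes over S and let N ≥ 0 be such that π_N(𝒦₁) = π_N(𝒦₂) and π_{N+1}(𝒦₁) ≠ π_{N+1}(𝒦₂). Then d(𝒦₁, 𝒦₂) ≥ 1/(N+2). -/

import Mathlib

open scoped BigOperators

/-- A simplicial complex over the vertex set `S`: a nonempty collection of
nonempty finite subsets of `S`, closed under taking nonempty subsets. -/
def IsSimplicialComplex {S : Type*} (K : Set (Finset S)) : Prop :=
  K.Nonempty ∧ (∀ F ∈ K, F.Nonempty) ∧
    ∀ F ∈ K, ∀ G : Finset S, G.Nonempty → G ⊆ F → G ∈ K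

/-- Halved ℓ¹ distance between finitely supported real functions:
`d(α,β) = (1/2) ∑ₛ |α s - β s|`. -/
noncomputable def l1dist {S : Type*} (α β : S →₀ ℝ) : ℝ :=
  (1 / 2) * (α - β).sum fun _ x => |x|

/-- The ℓ¹ geometric realization of a collection `K` of finite subsets of `S`:
finitely supported probability vectors whose support is a face of `K`. -/
def realization {S : Type*} (K : Set (Finset S)) : Set (S →₀ ℝ) :=
  {α | (∀ s, 0 ≤ α s) ∧ (α.sum fun _ x => x) = 1 ∧ α.support ∈ K}

/-- Distance from a point to a set of finitely supported functions. -/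
noncomputable def distToSet {S : Type*} (α : S →₀ ℝ) (X : Set (S →₀ ℝ)) : ℝ :=
  sInf (l1dist α '' X)

/-- One-sided Hausdorff distance between (the realizations of) two complexes. -/
noncomputable def hdelta {S : Type*} (K₁ K₂ : Set (Finset S)) : ℝ :=
  sSup ((fun α => distToSet α (realization K₂)) '' realization K₁)

/-- Hausdorff distance between (the realizations of) two simplicial complexes. -/
noncomputable def hdist {S : Type*} (K₁ K₂ : Set (Finset S)) : ℝ :=
  max (hdelta K₁ K₂) (hdelta K₂ K₁)

/-- `d(F, K)`: supremum of distances to `|K|₁` over probability vectors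
supported exactly on `F`. -/
noncomputable def dFace {S : Type*} (F : Finset S) (K : Set (Finset S)) : ℝ :=
  sSup ((fun α => distToSet α (realization K)) ''
    {α : S →₀ ℝ | (∀ s, 0 ≤ α s) ∧ (α.sum fun _ x => x) = 1 ∧ α.support = F})

/-- The `n`-skeleton of a simplicial complex. -/
def skeleton {S : Type*} (n : ℕ) (K : Set (Finset S)) : Set (Finset S) :=
  {F | F ∈ K ∧ F.card ≤ n + 1}

theorem l1dist_eq_aux {S : Type*} [DecidableEq S] (α β : S →₀ ℝ) :
    l1dist α β = (1 / 2) * ∑ s ∈ α.support ∪ β.support, |α s - β s| := by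
  unfold l1dist
  congr 1
  rw [Finsupp.sum_of_support_subset (s := α.support ∪ β.support)]
  · simp
  · exact Finsupp.support_sub
  · simp

theorem l1dist_nonneg_aux {S : Type*} (α β : S →₀ ℝ) : 0 ≤ l1dist α β := by
  unfold l1dist Finsupp.sum
  positivity

theorem sum_union_left_aux {S : Type*} [DecidableEq S] (α : S →₀ ℝ) (T : Finset S)
    (hT : α.support ⊆ T) (h : (α.sum fun _ x => x) = 1) : ∑ s ∈ T, α s = 1 := by
  rw [← h, Finsupp.sum_of_support_subset _ hT]
  simp

theorem l1dist_le_one_aux {S : Type*} {K L : Set (Finset S)} {α β : S →₀ ℝ}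
    (hα : α ∈ realization K) (hβ : β ∈ realization L) : l1dist α β ≤ 1 := by
  classical
  obtain ⟨a0, a1, _⟩ := hα
  obtain ⟨b0, b1, _⟩ := hβ
  rw [l1dist_eq_aux]
  have ha := sum_union_left_aux α (α.support ∪ β.support) Finset.subset_union_left a1
  have hb := sum_union_left_aux β (α.support ∪ β.support) Finset.subset_union_right b1
  have : ∑ s ∈ α.support ∪ β.support, |α s - β s|
      ≤ ∑ s ∈ α.support ∪ β.support, (α s + β s) := by
    apply Finset.sum_le_sum
    intro s _
    rw [abs_le]
    constructor <;> linarith [a0 s, b0 s]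
  rw [Finset.sum_add_distrib] at this
  linarith

theorem le_l1dist_aux {S : Type*} {α β : S →₀ ℝ}
    (a1 : (α.sum fun _ x => x) = 1) (b1 : (β.sum fun _ x => x) = 1) (s : S)
    (hs : s ∈ α.support) : α s - β s ≤ l1dist α β := by
  classical
  rw [l1dist_eq_aux]
  have ha := sum_union_left_aux α (α.support ∪ β.support) Finset.subset_union_left a1
  have hb := sum_union_left_aux β (α.support ∪ β.support) Finset.subset_union_right b1
  have hs' : s ∈ α.support ∪ β.support := Finset.mem_union_left _ hs
  rw [← Finset.add_sum_erase _ _ hs'] at ha hb ⊢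
  have h2 : ∑ t ∈ (α.support ∪ β.support).erase s, (β t - α t)
      ≤ ∑ t ∈ (α.support ∪ β.support).erase s, |α t - β t| := by
    apply Finset.sum_le_sum
    intro t _
    rw [abs_sub_comm]
    exact le_abs_self _
  rw [Finset.sum_sub_distrib] at h2
  have := le_abs_self (α s - β s)
  linarith

theorem realization_nonempty_aux {S : Type*} {K : Set (Finset S)}
    (h : IsSimplicialComplex K) : (realization K).Nonempty := by
  classical
  obtain ⟨⟨F, hF⟩, hne, hsub⟩ := h
  obtain ⟨v, hv⟩ := hne F hF
  refine ⟨Finsupp.single v 1, ?_, ?_, ?_⟩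
  · intro s
    rw [Finsupp.single_apply]
    split_ifs <;> norm_num
  · simp
  · rw [Finsupp.support_single_ne_zero _ one_ne_zero]
    exact hsub F hF _ (Finset.singleton_nonempty v) (by simpa using hv)

theorem hdelta_ge_aux {S : Type*} {K L : Set (Finset S)}
    (hK : IsSimplicialComplex K) (hL : IsSimplicialComplex L) (F : Finset S)
    (hF : F ∈ K) (hFL : F ∉ L) : 1 / (F.card : ℝ) ≤ hdelta K L := by
  classical
  have hne := hK.2.1 F hF
  have hc : (0 : ℝ) < F.card := by exact_mod_cast hne.card_pos
  let α : S →₀ ℝ := Finsupp.onFinset F (fun s => if s ∈ F then 1 / (F.card : ℝ) else 0)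
    (by intro s hs; by_contra h; simp [h] at hs)
  have hαs : ∀ s, α s = if s ∈ F then 1 / (F.card : ℝ) else 0 := fun s => rfl
  have hsupp : α.support = F := by
    ext s
    rw [Finsupp.mem_support_iff, hαs]
    by_cases h : s ∈ F
    · simp [h, hne.ne_empty]
    · simp [h]
  have hα : α ∈ realization K := by
    refine ⟨?_, ?_, ?_⟩
    · intro s
      rw [hαs]
      split_ifs <;> positivity
    · unfold Finsupp.sum
      rw [hsupp, Finset.sum_congr rfl (fun s hs => by rw [hαs, if_pos hs])]
      rw [Finset.sum_const, nsmul_eq_mul]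
      field_simp
    · rw [hsupp]; exact hF
  obtain ⟨β₀, hβ₀⟩ := realization_nonempty_aux hL
  have hbdd : BddAbove ((fun α => distToSet α (realization L)) '' realization K) := by
    refine ⟨1, ?_⟩
    rintro _ ⟨γ, hγ, rfl⟩
    have hb : BddBelow (l1dist γ '' realization L) := by
      refine ⟨0, ?_⟩
      rintro _ ⟨δ, _, rfl⟩
      exact l1dist_nonneg_aux _ _
    exact (csInf_le hb (Set.mem_image_of_mem _ hβ₀)).trans (l1dist_le_one_aux hγ hβ₀)
  refine le_trans ?_ (le_csSup hbdd ⟨α, hα, rfl⟩)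
  refine le_csInf ⟨_, β₀, hβ₀, rfl⟩ ?_
  rintro _ ⟨β, hβ, rfl⟩
  have : ¬ F ⊆ β.support := fun h => hFL (hL.2.2 _ hβ.2.2 F hne h)
  obtain ⟨s, hs, hsβ⟩ := Finset.not_subset.1 this
  have h := le_l1dist_aux hα.2.1 hβ.2.1 s (by rw [hsupp]; exact hs)
  rw [hαs, if_pos hs, Finsupp.notMem_support_iff.1 hsβ, sub_zero] at h
  exact h

theorem one_side_aux {S : Type*} {K L : Set (Finset S)}
    (hK : IsSimplicialComplex K) (hL : IsSimplicialComplex L) (N : ℕ)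
    (hN : skeleton N K = skeleton N L)
    (h : ¬ skeleton (N + 1) K ⊆ skeleton (N + 1) L) :
    1 / ((N : ℝ) + 2) ≤ hdelta K L := by
  obtain ⟨F, ⟨hF, hc⟩, hFL⟩ := Set.not_subset.1 h
  have hFL' : F ∉ L := fun h => hFL ⟨h, hc⟩
  refine le_trans ?_ (hdelta_ge_aux hK hL F hF hFL')
  have hpos : (0 : ℝ) < F.card := by exact_mod_cast (hK.2.1 F hF).card_pos
  apply one_div_le_one_div_of_le hpos
  exact_mod_cast hc

/-- If the `N`-skeletons of `𝒦₁, 𝒦₂` agree but their `(N+1)`-skeletons differ,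
then `d(𝒦₁, 𝒦₂) ≥ 1/(N+2)`. -/
theorem stmt9 {S : Type*} (K₁ K₂ : Set (Finset S))
    (h1 : IsSimplicialComplex K₁) (h2 : IsSimplicialComplex K₂) (N : ℕ)
    (hN : skeleton N K₁ = skeleton N K₂)
    (hN1 : skeleton (N + 1) K₁ ≠ skeleton (N + 1) K₂) :
    1 / ((N : ℝ) + 2) ≤ hdist K₁ K₂ := by
  by_cases h : skeleton (N + 1) K₁ ⊆ skeleton (N + 1) K₂
  · have h' : ¬ skeleton (N + 1) K₂ ⊆ skeleton (N + 1) K₁ :=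
      fun h' => hN1 (Set.Subset.antisymm h h')
    exact le_max_of_le_right (one_side_aux h2 h1 N hN.symm h')
  · exact le_max_of_le_left (one_side_aux h1 h2 N hN h)
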